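/- Let k ≥ 4 and let S be a set of n points in ℝ³. If T is a family of k-gons on S such that no two k-gons of T intersect badly, then no two distinct k-gons of T share a diagonal (a pair of vertices common to both polygons and non-adjacent in both), and consequently |T| ≤ (n choose 2) / (k(k−3)/2). -/

import Mathlib

open EuclideanGeometry

noncomputable section

abbrev E3 : Type := EuclideanSpace ℝ (Fin 3)

attribute [local instance] Classical.propDecidable

/-- A `k`-gon in ℝ³: a set of `k` coplanar points in convex position. -/
def IsKGon (k : ℕ) (P : Finset E3) : Prop :=
  P.card = k ∧ Coplanar ℝ (P : Set E3) ∧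
    ∀ p ∈ P, p ∉ convexHull ℝ ((P.erase p) : Set E3)

/-- A `k`-gon on a point set `S`. -/
def IsKGonOn (k : ℕ) (S P : Finset E3) : Prop :=
  P ⊆ S ∧ IsKGon k P

/-- Two vertices of a convex polygon are non-adjacent if the open segment between them
meets the relative interior of the polygon's convex hull (i.e. it is a diagonal). -/
def NonAdjacentIn (P : Finset E3) (u v : E3) : Prop :=
  (openSegment ℝ u v ∩ intrinsicInterior ℝ (convexHull ℝ (P : Set E3))).Nonempty

/-- Two polygons share a diagonal: a pair of distinct vertices common to both polygons
which are non-adjacent in both. -/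
def ShareDiagonal (P Q : Finset E3) : Prop :=
  ∃ u v : E3, u ≠ v ∧ u ∈ P ∧ v ∈ P ∧ u ∈ Q ∧ v ∈ Q ∧
    NonAdjacentIn P u v ∧ NonAdjacentIn Q u v

/-- Two polygons (given by their vertex sets) intersect badly if the intersection of their
convex hulls contains a common vertex and also a point in the relative interior of each. -/
def IntersectBadly (P Q : Finset E3) : Prop :=
  (∃ v, v ∈ P ∧ v ∈ Q ∧
    v ∈ convexHull ℝ (P : Set E3) ∩ convexHull ℝ (Q : Set E3)) ∧
  (∃ x, x ∈ convexHull ℝ (P : Set E3) ∩ convexHull ℝ (Q : Set E3) ∧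
    x ∈ intrinsicInterior ℝ (convexHull ℝ (P : Set E3)) ∧
    x ∈ intrinsicInterior ℝ (convexHull ℝ (Q : Set E3)))

/-!
If two polygons share a diagonal, its open segment lies in the relative interior of both hulls,
while its endpoints are common vertices: the polygons intersect badly. So the diagonals of the
members of `T` are distinct pairs of points of `S`, and it remains to see that a `k`-gon has at
least `k (k - 3) / 2` diagonals, i.e. that each vertex `u` is joined by a diagonal to all but at
most two of the others. Given `u` and three more vertices, Radon's theorem splits these four
coplanar points into two parts with intersecting hulls. Convex position forces both parts to be
pairs, so the segment from `u` to one of the three crosses the segment between the other two, and a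
crossing point is relatively interior.
-/

open Topology

theorem image_add_right_vectorSpan {𝕜 V : Type*} [Ring 𝕜] [AddCommGroup V] [Module 𝕜 V]
    {C : Set V} {x : V} (hx : x ∈ affineSpan 𝕜 C) :
    (· + x) '' (vectorSpan 𝕜 C : Set V) = affineSpan 𝕜 C := by
  ext z
  rw [← direction_affineSpan]
  constructor
  · rintro ⟨w, hw, rfl⟩
    exact AffineSubspace.vadd_mem_of_mem_direction hw hx
  · exact fun hz ↦ ⟨z - x, AffineSubspace.vsub_mem_direction hz hx, sub_add_cancel z x⟩

theorem eventually_smul_add_smul_add_mem {V : Type*} [AddCommGroup V] [Module ℝ V] {C : Set V}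
    (hC : Convex ℝ C) {u v a c x : V} (hu : u ∈ C) (hv : v ∈ C) (ha : a ∈ C) (hc : c ∈ C)
    (hxuv : x ∈ openSegment ℝ u v) (hxac : x ∈ openSegment ℝ a c) :
    ∀ᶠ p : ℝ × ℝ in 𝓝 0, p.1 • (v - u) + p.2 • (c - a) + x ∈ C := by
  simp only [openSegment_eq_image', Set.mem_image] at hxuv hxac
  obtain ⟨s, hs, hxs⟩ := hxuv
  obtain ⟨t, ht, hxt⟩ := hxac
  have hs_near : ∀ᶠ p : ℝ × ℝ in 𝓝 0, s + 2 * p.1 ∈ Set.Ioo 0 1 := by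
    have : Continuous fun p : ℝ × ℝ ↦ s + 2 * p.1 := by fun_prop
    exact this.continuousAt.eventually_mem (isOpen_Ioo.mem_nhds (by simpa using hs))
  have ht_near : ∀ᶠ p : ℝ × ℝ in 𝓝 0, t + 2 * p.2 ∈ Set.Ioo 0 1 := by
    have : Continuous fun p : ℝ × ℝ ↦ t + 2 * p.2 := by fun_prop
    exact this.continuousAt.eventually_mem (isOpen_Ioo.mem_nhds (by simpa using ht))
  filter_upwards [hs_near, ht_near] with p hp₁ hp₂
  have hx : x = (1 / 2 : ℝ) • (u + s • (v - u)) + (1 / 2 : ℝ) • (a + t • (c - a)) := by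
    rw [hxs, hxt, ← add_smul, add_halves, one_smul]
  -- A perturbation of `x` is the midpoint of perturbations along the two segments.
  have hmid : p.1 • (v - u) + p.2 • (c - a) + x =
      (1 / 2 : ℝ) • (u + (s + 2 * p.1) • (v - u)) +
        (1 / 2 : ℝ) • (a + (t + 2 * p.2) • (c - a)) := by
    rw [hx]
    module
  rw [hmid]
  exact hC (hC.add_smul_sub_mem hu hv (Set.Ioo_subset_Icc_self hp₁))
    (hC.add_smul_sub_mem ha hc (Set.Ioo_subset_Icc_self hp₂)) (by simp) (by simp) (add_halves 1)

section IntrinsicInterior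

variable {V : Type*} [AddCommGroup V] [Module ℝ V] [TopologicalSpace V] [IsTopologicalAddGroup V]

theorem mem_intrinsicInterior_iff_eventually_vectorSpan {C : Set V} {x : V} :
    x ∈ intrinsicInterior ℝ C ↔
      x ∈ affineSpan ℝ C ∧ ∀ᶠ w : vectorSpan ℝ C in 𝓝 0, (w : V) + x ∈ C := by
  have nhds_iff (hx : x ∈ affineSpan ℝ C) :
      C ∈ 𝓝[affineSpan ℝ C] x ↔ ∀ᶠ w : vectorSpan ℝ C in 𝓝 0, (w : V) + x ∈ C := by
    have hmap := (Homeomorph.addRight x).isEmbedding.map_nhdsWithin_eq (vectorSpan ℝ C : Set V) 0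
    simp only [Homeomorph.coe_addRight, image_add_right_vectorSpan hx, zero_add] at hmap
    rw [← hmap, Filter.mem_map]
    exact (preimage_coe_mem_nhds_subtype (a := (0 : vectorSpan ℝ C))).symm
  rw [mem_intrinsicInterior]
  constructor
  · rintro ⟨y, hy, rfl⟩
    rw [mem_interior_iff_mem_nhds] at hy
    exact ⟨y.2, (nhds_iff y.2).1 (preimage_coe_mem_nhds_subtype.1 hy)⟩
  · rintro ⟨hx, h⟩
    refine ⟨⟨x, hx⟩, mem_interior_iff_mem_nhds.2 ?_, rfl⟩
    exact preimage_coe_mem_nhds_subtype.2 ((nhds_iff hx).2 h)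

variable [ContinuousSMul ℝ V] {C : Set V}

theorem openSegment_subset_intrinsicInterior_of_left (hC : Convex ℝ C) {y z : V}
    (hy : y ∈ intrinsicInterior ℝ C) (hz : z ∈ C) :
    openSegment ℝ y z ⊆ intrinsicInterior ℝ C := by
  rintro _ ⟨a, b, ha, hb, hab, rfl⟩
  have hmem := hC (intrinsicInterior_subset hy) hz ha.le hb.le hab
  rw [mem_intrinsicInterior_iff_eventually_vectorSpan] at hy ⊢
  refine ⟨subset_affineSpan ℝ C hmem, ?_⟩
  have hscale : Filter.Tendsto (fun w : vectorSpan ℝ C ↦ a⁻¹ • w) (𝓝 0) (𝓝 0) := by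
    simpa only [smul_zero] using (continuous_const_smul a⁻¹).tendsto (0 : vectorSpan ℝ C)
  filter_upwards [hscale.eventually hy.2] with w hw
  have hcombo := hC hw hz ha.le hb.le hab
  rwa [Submodule.coe_smul, smul_add, smul_inv_smul₀ ha.ne', add_assoc] at hcombo

theorem openSegment_subset_intrinsicInterior_of_inter_nonempty (hC : Convex ℝ C) {u v : V}
    (hu : u ∈ C) (hv : v ∈ C) (h : (openSegment ℝ u v ∩ intrinsicInterior ℝ C).Nonempty) :
    openSegment ℝ u v ⊆ intrinsicInterior ℝ C := by
  obtain ⟨x, hxuv, hx⟩ := h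
  have hx_line : x ∈ Set.range (AffineMap.lineMap u v : ℝ → V) := by
    rw [openSegment_eq_image_lineMap] at hxuv
    exact Set.image_subset_range _ _ hxuv
  refine (openSegment_subset_union u v hx_line).trans ?_
  refine Set.insert_subset hx (Set.union_subset ?_ ?_)
  · rw [openSegment_symm]
    exact openSegment_subset_intrinsicInterior_of_left hC hx hu
  · exact openSegment_subset_intrinsicInterior_of_left hC hx hv

theorem mem_intrinsicInterior_of_mem_openSegment_of_vectorSpan_le [T2Space V] (hC : Convex ℝ C)
    {u v a c x : V} (hu : u ∈ C) (hv : v ∈ C) (ha : a ∈ C) (hc : c ∈ C)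
    (hspan : vectorSpan ℝ C ≤ Submodule.span ℝ {v - u, c - a})
    (hxuv : x ∈ openSegment ℝ u v) (hxac : x ∈ openSegment ℝ a c) :
    x ∈ intrinsicInterior ℝ C := by
  refine mem_intrinsicInterior_iff_eventually_vectorSpan.2
    ⟨subset_affineSpan ℝ C (hC.openSegment_subset hu hv hxuv), ?_⟩
  let d : vectorSpan ℝ C := ⟨v - u, vsub_mem_vectorSpan ℝ hv hu⟩
  let e : vectorSpan ℝ C := ⟨c - a, vsub_mem_vectorSpan ℝ hc ha⟩
  let L : ℝ × ℝ →ₗ[ℝ] vectorSpan ℝ C :=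
    (LinearMap.toSpanSingleton ℝ _ d).coprod (LinearMap.toSpanSingleton ℝ _ e)
  have hL : Function.Surjective L := by
    intro w
    obtain ⟨α, β, hw⟩ := Submodule.mem_span_pair.1 (hspan w.2)
    exact ⟨(α, β), Subtype.ext hw⟩
  have : FiniteDimensional ℝ (vectorSpan ℝ C) := Module.Finite.of_surjective L hL
  have himage := (L.isOpenMap_of_finiteDimensional hL).image_mem_nhds
    (eventually_smul_add_smul_add_mem hC hu hv ha hc hxuv hxac)
  rw [map_zero] at himage
  filter_upwards [himage]
  rintro _ ⟨p, hp, rfl⟩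
  exact hp

end IntrinsicInterior

section ConvexPosition

variable {𝕜 V ι : Type*} [Field 𝕜] [LinearOrder 𝕜] [AddCommGroup V] [Module 𝕜 V] {f : ι → V}

theorem nontrivial_of_mem_convexHull_image_of_compl (hf : ConvexIndependent 𝕜 f) {I : Set ι}
    {x : V} (hxI : x ∈ convexHull 𝕜 (f '' I)) (hxI' : x ∈ convexHull 𝕜 (f '' Iᶜ)) :
    I.Nontrivial := by
  by_contra hI
  rcases (Set.not_nontrivial_iff.1 hI).eq_empty_or_singleton with rfl | ⟨i, rfl⟩
  · simp at hxI
  · rw [Set.image_singleton, convexHull_singleton, Set.mem_singleton_iff] at hxI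
    subst hxI
    exact hf _ i hxI' rfl

variable [IsStrictOrderedRing 𝕜]

theorem not_collinear_triple_of_convexIndependent (hf : ConvexIndependent 𝕜 f) {i j l : ι}
    (hij : i ≠ j) (hil : i ≠ l) (hjl : j ≠ l) : ¬Collinear 𝕜 {f i, f j, f l} := by
  have not_wbtw {p q r : ι} (hqp : q ≠ p) (hqr : q ≠ r) : ¬Wbtw 𝕜 (f p) (f q) (f r) := by
    intro h
    have hq := h.mem_segment
    rw [← convexHull_pair, ← Set.image_pair, hf.mem_convexHull_iff] at hq
    exact hq.elim hqp hqr
  intro h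
  rcases h.wbtw_or_wbtw_or_wbtw with h | h | h
  · exact not_wbtw hij.symm hjl h
  · exact not_wbtw hjl.symm hil.symm h
  · exact not_wbtw hil hij h

theorem mem_openSegment_of_mem_convexHull_image (hf : ConvexIndependent 𝕜 f) {i j : ι}
    {J : Set ι} (hi : i ∉ J) (hj : j ∉ J) {x : V} (hx : x ∈ segment 𝕜 (f i) (f j))
    (hxJ : x ∈ convexHull 𝕜 (f '' J)) : x ∈ openSegment 𝕜 (f i) (f j) := by
  refine mem_openSegment_of_ne_left_right ?_ ?_ hx
  · rintro rfl
    exact hi (hf J i hxJ)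
  · rintro rfl
    exact hj (hf J j hxJ)

theorem exists_openSegment_inter_openSegment_of_card_eq_four (hι : Nat.card ι = 4)
    (hf : ConvexIndependent 𝕜 f) (hdep : ¬AffineIndependent 𝕜 f) (i : ι) :
    ∃ j k l, i ≠ j ∧ i ≠ k ∧ i ≠ l ∧ k ≠ l ∧
      (openSegment 𝕜 (f i) (f j) ∩ openSegment 𝕜 (f k) (f l)).Nonempty := by
  have : Finite ι := Nat.finite_of_card_ne_zero (by lia)
  obtain ⟨I, x, hxI, hxI'⟩ := Convex.radon_partition hdep
  wlog hi : i ∈ I generalizing I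
  · exact this Iᶜ hxI' (by rwa [compl_compl]) hi
  have hI := nontrivial_of_mem_convexHull_image_of_compl hf hxI hxI'
  have hI' := nontrivial_of_mem_convexHull_image_of_compl hf hxI' (by rwa [compl_compl])
  rw [← Set.one_lt_ncard_iff_nontrivial] at hI hI'
  have hcard := I.ncard_add_ncard_compl
  obtain ⟨j, hj⟩ := Set.ncard_eq_one.1
    (show (I \ {i}).ncard = 1 by rw [Set.ncard_sdiff_singleton_of_mem hi]; lia)
  obtain ⟨k, l, hkl, hIkl⟩ := Set.ncard_eq_two.1 (show Iᶜ.ncard = 2 by lia)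
  have hIij : I = {i, j} := by rw [← hj, Set.insert_sdiff_self_of_mem hi]
  have hij : j ∈ I \ {i} := hj ▸ rfl
  have hk : k ∉ I := by rw [← Set.mem_compl_iff, hIkl]; simp
  have hl : l ∉ I := by rw [← Set.mem_compl_iff, hIkl]; simp
  have hx_ij : x ∈ segment 𝕜 (f i) (f j) := by
    rwa [hIij, Set.image_pair, convexHull_pair] at hxI
  have hx_kl : x ∈ segment 𝕜 (f k) (f l) := by
    rwa [hIkl, Set.image_pair, convexHull_pair] at hxI'
  exact ⟨j, k, l, Ne.symm hij.2, ne_of_mem_of_not_mem hi hk, ne_of_mem_of_not_mem hi hl, hkl, x,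
    mem_openSegment_of_mem_convexHull_image hf (not_not_intro hi) (not_not_intro hij.1) hx_ij hxI',
    mem_openSegment_of_mem_convexHull_image hf hk hl hx_kl hxI⟩

end ConvexPosition

section Coplanar

theorem not_affineIndependent_of_coplanar {𝕜 V P ι : Type*} [DivisionRing 𝕜] [AddCommGroup V]
    [Module 𝕜 V] [AddTorsor V P] [Fintype ι] {f : ι → P} (hcard : Fintype.card ι = 4)
    (hf : Coplanar 𝕜 (Set.range f)) : ¬AffineIndependent 𝕜 f := by
  intro h
  have hthree := h.finrank_vectorSpan (n := 3) hcard
  have htwo := hf.finrank_le_two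
  lia

theorem vectorSpan_triple_eq_of_coplanar {𝕜 V P : Type*} [DivisionRing 𝕜] [AddCommGroup V]
    [Module 𝕜 V] [AddTorsor V P] {s : Set P} (hs : Coplanar 𝕜 s) {p q r : P} (hp : p ∈ s)
    (hq : q ∈ s) (hr : r ∈ s) (h : ¬Collinear 𝕜 {p, q, r}) :
    vectorSpan 𝕜 {p, q, r} = vectorSpan 𝕜 s := by
  have := hs.finiteDimensional_vectorSpan
  refine Submodule.eq_of_le_of_finrank_le (vectorSpan_mono 𝕜 ?_) (hs.finrank_le_two.trans ?_)
  · simp [Set.insert_subset_iff, hp, hq, hr]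
  · have hfinrank := (affineIndependent_iff_not_collinear_set.2 h).finrank_vectorSpan (n := 2) rfl
    rw [Matrix.range_cons, Matrix.range_cons_cons_empty] at hfinrank
    exact hfinrank.ge

theorem vectorSpan_triple_le_span_of_mem_openSegment {𝕜 V : Type*} [Field 𝕜] [LinearOrder 𝕜]
    [IsStrictOrderedRing 𝕜] [AddCommGroup V] [Module 𝕜 V] {u v a c x : V}
    (hxuv : x ∈ openSegment 𝕜 u v) (hxac : x ∈ openSegment 𝕜 a c) :
    vectorSpan 𝕜 {u, a, c} ≤ Submodule.span 𝕜 {v - u, c - a} := by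
  simp only [openSegment_eq_image', Set.mem_image] at hxuv hxac
  obtain ⟨s, -, hxs⟩ := hxuv
  obtain ⟨t, -, hxt⟩ := hxac
  have hu : u -ᵥ a = t • (c - a) - s • (v - u) := by
    rw [vsub_eq_sub, sub_eq_sub_iff_add_eq_add, hxs, add_comm, hxt]
  have hd : v - u ∈ Submodule.span 𝕜 {v - u, c - a} := Submodule.mem_span_of_mem (by simp)
  have he : c - a ∈ Submodule.span 𝕜 {v - u, c - a} := Submodule.mem_span_of_mem (by simp)
  have ha : a ∈ ({u, a, c} : Set V) := by simp
  rw [vectorSpan_eq_span_vsub_set_right 𝕜 ha, Submodule.span_le]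
  rintro _ ⟨p, rfl | rfl | rfl, rfl⟩
  · simp only [SetLike.mem_coe, hu]
    exact sub_mem (Submodule.smul_mem _ _ he) (Submodule.smul_mem _ _ hd)
  · simp
  · exact he

end Coplanar

section PlanarPolygon

variable {V : Type*} [AddCommGroup V] [Module ℝ V] [TopologicalSpace V]

/-- A convex `k`-gon in a real vector space, given by its set of vertices: the analogue of `IsKGon`
in arbitrary ambient spaces, with convex position expressed by `ConvexIndependent`. -/
structure IsPlanarPolygon (k : ℕ) (P : Finset V) : Prop where
  card_eq : P.card = k
  coplanar : Coplanar ℝ (P : Set V)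
  convexIndependent : ConvexIndependent ℝ ((↑) : ↥(P : Set V) → V)

/-- The relative interior of the polygon with vertex set `P`. -/
def polygonInterior (P : Finset V) : Set V :=
  intrinsicInterior ℝ (convexHull ℝ (P : Set V))

/-- The diagonals of the polygon with vertex set `P`, as ordered pairs of distinct vertices: every
diagonal is counted twice. -/
def orderedDiagonals (P : Finset V) : Finset (V × V) :=
  P.offDiag.filter fun p ↦ (openSegment ℝ p.1 p.2 ∩ polygonInterior P).Nonempty

/-- Two polygons meet badly if they have a common vertex and a common relative interior point: the
analogue of `IntersectBadly` in arbitrary ambient spaces. -/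
def MeetBadly (P Q : Finset V) : Prop :=
  (∃ v, v ∈ P ∧ v ∈ Q) ∧ (polygonInterior P ∩ polygonInterior Q).Nonempty

theorem mk_mem_orderedDiagonals {P : Finset V} {u v : V} :
    (u, v) ∈ orderedDiagonals P ↔
      u ∈ P ∧ v ∈ P ∧ u ≠ v ∧ (openSegment ℝ u v ∩ polygonInterior P).Nonempty := by
  simp only [orderedDiagonals, Finset.mem_filter, Finset.mem_offDiag, and_assoc]

theorem orderedDiagonals_subset_offDiag {P S : Finset V} (hPS : P ⊆ S) :
    orderedDiagonals P ⊆ S.offDiag :=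
  (Finset.filter_subset _ _).trans (Finset.offDiag_mono hPS)

variable [IsTopologicalAddGroup V] [ContinuousSMul ℝ V] {k : ℕ} {P Q : Finset V}

theorem openSegment_subset_polygonInterior {u v : V} (h : (u, v) ∈ orderedDiagonals P) :
    openSegment ℝ u v ⊆ polygonInterior P := by
  obtain ⟨hu, hv, -, hint⟩ := mk_mem_orderedDiagonals.1 h
  exact openSegment_subset_intrinsicInterior_of_inter_nonempty (convex_convexHull ℝ _)
    (subset_convexHull ℝ _ hu) (subset_convexHull ℝ _ hv) hint

theorem disjoint_orderedDiagonals_of_not_meetBadly (h : ¬MeetBadly P Q) :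
    Disjoint (orderedDiagonals P) (orderedDiagonals Q) := by
  rw [Finset.disjoint_left]
  rintro ⟨u, v⟩ hP hQ
  have huP := (mk_mem_orderedDiagonals.1 hP).1
  have huQ := (mk_mem_orderedDiagonals.1 hQ).1
  have hmid := midpoint_mem_openSegment (𝕜 := ℝ) u v
  exact h ⟨⟨u, huP, huQ⟩, midpoint ℝ u v, openSegment_subset_polygonInterior hP hmid,
    openSegment_subset_polygonInterior hQ hmid⟩

variable [T2Space V]

theorem mem_polygonInterior_of_mem_openSegment (hP : Coplanar ℝ (P : Set V)) {u v a c x : V}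
    (hu : u ∈ P) (hv : v ∈ P) (ha : a ∈ P) (hc : c ∈ P) (huac : ¬Collinear ℝ {u, a, c})
    (hxuv : x ∈ openSegment ℝ u v) (hxac : x ∈ openSegment ℝ a c) : x ∈ polygonInterior P := by
  refine mem_intrinsicInterior_of_mem_openSegment_of_vectorSpan_le (convex_convexHull ℝ _)
    (subset_convexHull ℝ _ hu) (subset_convexHull ℝ _ hv) (subset_convexHull ℝ _ ha)
    (subset_convexHull ℝ _ hc) ?_ hxuv hxac
  rw [← direction_affineSpan, affineSpan_convexHull, direction_affineSpan,
    ← vectorSpan_triple_eq_of_coplanar hP hu ha hc huac]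
  exact vectorSpan_triple_le_span_of_mem_openSegment hxuv hxac

theorem exists_mk_mem_orderedDiagonals_of_card_eq_four (hP : IsPlanarPolygon k P)
    {F : Finset V} (hF : F ⊆ P) (hcard : F.card = 4) {u : V} (hu : u ∈ F) :
    ∃ v ∈ F, (u, v) ∈ orderedDiagonals P := by
  have hconv : ConvexIndependent ℝ ((↑) : F → V) := hP.convexIndependent.mono hF
  have hdep : ¬AffineIndependent ℝ ((↑) : F → V) := by
    refine not_affineIndependent_of_coplanar (by rwa [Fintype.card_coe]) (hP.coplanar.subset ?_)
    rintro _ ⟨w, rfl⟩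
    exact hF w.2
  obtain ⟨v, a, c, huv, hua, huc, hac, x, hxuv, hxac⟩ :=
    exists_openSegment_inter_openSegment_of_card_eq_four
      (by rwa [Nat.card_eq_fintype_card, Fintype.card_coe]) hconv hdep ⟨u, hu⟩
  have huac := not_collinear_triple_of_convexIndependent hconv hua huc hac
  have hx : x ∈ polygonInterior P :=
    mem_polygonInterior_of_mem_openSegment hP.coplanar (hF hu) (hF v.2) (hF a.2) (hF c.2)
      huac hxuv hxac
  exact ⟨v, v.2, mk_mem_orderedDiagonals.2
    ⟨hF hu, hF v.2, Subtype.coe_ne_coe.2 huv, x, hxuv, hx⟩⟩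

theorem card_filter_mk_notMem_orderedDiagonals_le_two (hP : IsPlanarPolygon k P) {u : V}
    (hu : u ∈ P) : ((P.erase u).filter fun v ↦ (u, v) ∉ orderedDiagonals P).card ≤ 2 := by
  by_contra! hlt
  obtain ⟨B, hB, hBcard⟩ := Finset.exists_subset_card_eq (Nat.succ_le_of_lt hlt)
  have hBP : B ⊆ P.erase u := hB.trans (Finset.filter_subset _ _)
  have huB : u ∉ B := fun h ↦ Finset.notMem_erase u P (hBP h)
  have hF : insert u B ⊆ P := Finset.insert_subset hu (hBP.trans (Finset.erase_subset u P))
  have hFcard : (insert u B).card = 4 := by rw [Finset.card_insert_of_notMem huB, hBcard]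
  obtain ⟨v, hvF, hv⟩ := exists_mk_mem_orderedDiagonals_of_card_eq_four hP hF hFcard
    (Finset.mem_insert_self u B)
  have hvu : v ≠ u := (mk_mem_orderedDiagonals.1 hv).2.2.1.symm
  exact (Finset.mem_filter.1 (hB (Finset.mem_of_mem_insert_of_ne hvF hvu))).2 hv

theorem sub_three_le_card_orderedDiagonals_fst_eq (hP : IsPlanarPolygon k P) {u : V}
    (hu : u ∈ P) : k - 3 ≤ ((orderedDiagonals P).filter fun p ↦ p.1 = u).card := by
  let N := (P.erase u).filter fun v ↦ (u, v) ∈ orderedDiagonals P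
  let A := (P.erase u).filter fun v ↦ (u, v) ∉ orderedDiagonals P
  have hA : A.card ≤ 2 := card_filter_mk_notMem_orderedDiagonals_le_two hP hu
  have hNA : N.card + A.card = k - 1 := by
    rw [Finset.card_filter_add_card_filter_not, Finset.card_erase_of_mem hu, hP.card_eq]
  have hN : N.card ≤ ((orderedDiagonals P).filter fun p ↦ p.1 = u).card := by
    refine Finset.card_le_card_of_injOn (Prod.mk u) ?_ (Prod.mk_right_injective u).injOn
    exact fun v hv ↦ Finset.mem_filter.2 ⟨(Finset.mem_filter.1 hv).2, rfl⟩
  lia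

theorem sub_three_mul_le_card_orderedDiagonals (hP : IsPlanarPolygon k P) :
    (k - 3) * k ≤ (orderedDiagonals P).card := by
  have hfst : ∀ p ∈ orderedDiagonals P, p.1 ∈ P := fun _ hp ↦ (mk_mem_orderedDiagonals.1 hp).1
  have hcard := Finset.mul_card_image_le_card_of_maps_to hfst (k - 3)
    fun _ hu ↦ sub_three_le_card_orderedDiagonals_fst_eq hP hu
  rwa [hP.card_eq] at hcard

theorem card_mul_le_of_pairwiseDisjoint_orderedDiagonals {S : Finset V} {T : Finset (Finset V)}
    (hTS : ∀ P ∈ T, P ⊆ S) (hT : ∀ P ∈ T, IsPlanarPolygon k P)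
    (hdisj : (T : Set (Finset V)).PairwiseDisjoint orderedDiagonals) :
    T.card * ((k - 3) * k) ≤ 2 * S.card.choose 2 :=
  calc
    T.card * ((k - 3) * k) ≤ ∑ P ∈ T, (orderedDiagonals P).card :=
      Finset.card_nsmul_le_sum T _ _ fun P hP ↦ sub_three_mul_le_card_orderedDiagonals (hT P hP)
    _ = (T.biUnion orderedDiagonals).card := (Finset.card_biUnion hdisj).symm
    _ ≤ S.offDiag.card := Finset.card_le_card <| Finset.biUnion_subset.2 fun P hP ↦
      orderedDiagonals_subset_offDiag (hTS P hP)
    _ = 2 * S.card.choose 2 := by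
      rw [Finset.offDiag_card, ← Nat.mul_sub_one, Nat.choose_two_right,
        Nat.mul_div_cancel' (Nat.even_mul_pred_self _).two_dvd]

theorem stmt11_general (hk : 4 ≤ k) {S : Finset V} {T : Finset (Finset V)}
    (hTS : ∀ P ∈ T, P ⊆ S) (hT : ∀ P ∈ T, IsPlanarPolygon k P)
    (hInt : ∀ P ∈ T, ∀ Q ∈ T, P ≠ Q → ¬MeetBadly P Q) :
    (∀ P ∈ T, ∀ Q ∈ T, P ≠ Q → Disjoint (orderedDiagonals P) (orderedDiagonals Q)) ∧
      (T.card : ℝ) ≤ (S.card.choose 2 : ℝ) / ((k : ℝ) * ((k : ℝ) - 3) / 2) := by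
  have hdisj : ∀ P ∈ T, ∀ Q ∈ T, P ≠ Q → Disjoint (orderedDiagonals P) (orderedDiagonals Q) :=
    fun P hP Q hQ hne ↦ disjoint_orderedDiagonals_of_not_meetBadly (hInt P hP Q hQ hne)
  refine ⟨hdisj, ?_⟩
  have hcount := card_mul_le_of_pairwiseDisjoint_orderedDiagonals hTS hT hdisj
  have hcount_real : (T.card : ℝ) * ((k - 3) * k) ≤ 2 * S.card.choose 2 := by
    have hcast : ((k - 3 : ℕ) : ℝ) = k - 3 := Nat.cast_sub (by lia)
    rw [← hcast]
    exact_mod_cast hcount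
  have hk' : (4 : ℝ) ≤ k := by exact_mod_cast hk
  rw [le_div_iff₀ (by nlinarith)]
  linarith

end PlanarPolygon

theorem IsKGon.isPlanarPolygon {k : ℕ} {P : Finset E3} (hP : IsKGon k P) :
    IsPlanarPolygon k P where
  card_eq := hP.1
  coplanar := hP.2.1
  convexIndependent := by
    rw [convexIndependent_set_iff_notMem_convexHull_sdiff]
    simpa only [Finset.coe_erase, Finset.mem_coe] using hP.2.2

theorem MeetBadly.intersectBadly {P Q : Finset E3} (h : MeetBadly P Q) : IntersectBadly P Q := by
  obtain ⟨⟨v, hvP, hvQ⟩, x, hxP, hxQ⟩ := h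
  exact ⟨⟨v, hvP, hvQ, subset_convexHull ℝ _ hvP, subset_convexHull ℝ _ hvQ⟩,
    x, ⟨intrinsicInterior_subset hxP, intrinsicInterior_subset hxQ⟩, hxP, hxQ⟩

theorem ShareDiagonal.not_disjoint_orderedDiagonals {P Q : Finset E3} (h : ShareDiagonal P Q) :
    ¬Disjoint (orderedDiagonals P) (orderedDiagonals Q) := by
  obtain ⟨u, v, hne, huP, hvP, huQ, hvQ, hP, hQ⟩ := h
  exact Finset.not_disjoint_iff.2 ⟨(u, v), mk_mem_orderedDiagonals.2 ⟨huP, hvP, hne, hP⟩,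
    mk_mem_orderedDiagonals.2 ⟨huQ, hvQ, hne, hQ⟩⟩

theorem stmt11 (k : ℕ) (hk : 4 ≤ k) (n : ℕ) (S : Finset E3) (hS : S.card = n)
    (T : Finset (Finset E3)) (hT : ∀ P ∈ T, IsKGonOn k S P)
    (hInt : ∀ P ∈ T, ∀ Q ∈ T, P ≠ Q → ¬ IntersectBadly P Q) :
    (∀ P ∈ T, ∀ Q ∈ T, P ≠ Q → ¬ ShareDiagonal P Q) ∧
    (T.card : ℝ) ≤ (n.choose 2 : ℝ) / ((k : ℝ) * ((k : ℝ) - 3) / 2) := by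
  obtain ⟨hdisj, hcard⟩ := stmt11_general hk (fun P hP ↦ (hT P hP).1)
    (fun P hP ↦ (hT P hP).2.isPlanarPolygon)
    fun P hP Q hQ hne h ↦ hInt P hP Q hQ hne h.intersectBadly
  exact ⟨fun P hP Q hQ hne h ↦ h.not_disjoint_orderedDiagonals (hdisj P hP Q hQ hne), hS ▸ hcard⟩
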